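/- Let (X_1,…,X_r) have the GEV_r density f_r with parameters μ ∈ ℝ, σ > 0, ξ ≠ 0, and r ≥ 2, and set Y = −log σ − (1+ξ Z_r)^{−1/ξ} + (1+ξ Z_{r−1})^{−1/ξ} − (1/ξ + 1) log(1+ξ Z_r). Then E[Y] = −log σ − 1 + (1+ξ)ψ(r). -/

import Mathlib

open MeasureTheory ProbabilityTheory Real Filter Topology

/-- The joint density of the `r` largest order statistics limit (GEV_r) with
location `μ`, scale `σ`, and shape `ξ ≠ 0`.  The coordinates are in decreasing
order: `x 0` is `x_1` (the largest) and `x ⟨r-1,_⟩` is `x_r`. -/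
noncomputable def gevrDensity (μ σ ξ : ℝ) (r : ℕ) (x : Fin r → ℝ) : ℝ :=
  if h : 0 < r ∧ StrictAnti x ∧ (∀ j, 0 < 1 + ξ * ((x j - μ) / σ)) then
    (σ ^ r)⁻¹ * Real.exp
      (-(1 + ξ * ((x ⟨r - 1, Nat.sub_lt h.1 Nat.one_pos⟩ - μ) / σ)) ^ (-1 / ξ)
        - (1 / ξ + 1) * ∑ j, Real.log (1 + ξ * ((x j - μ) / σ)))
  else 0

/-- The GEV_r probability measure on `ℝ^r`, given by the density `gevrDensity`. -/
noncomputable def gevrMeasure (μ σ ξ : ℝ) (r : ℕ) : Measure (Fin r → ℝ) :=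
  MeasureTheory.volume.withDensity fun x => ENNReal.ofReal (gevrDensity μ σ ξ r x)

/-- The digamma function `ψ(x) = Γ'(x)/Γ(x)`. -/
noncomputable def digamma (x : ℝ) : ℝ := deriv Real.Gamma x / Real.Gamma x

/-!
The GEV_r law describes the `r` largest points `x₁ > ⋯ > xᵣ` of a Poisson process on the line, and
the exponent function `Λ x = (1 + ξ (x - μ) / σ) ^ (-1 / ξ)` of the GEV law maps this process to a
unit rate Poisson process on `(0, ∞)`. Hence `Tⱼ = Λ xⱼ` are the first `r` arrival times of the
latter, with joint density `exp (-tᵣ)` on the cone `0 < t₁ < ⋯ < tᵣ`, and `Tⱼ` has the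
Gamma(`j`, 1) law. In these variables
`Y = -log σ - Tᵣ + Tᵣ₋₁ + (1 + ξ) log Tᵣ`,
where `E[Tⱼ] = j`, and `E[log Tⱼ] = ψ(j)` is the derivative at `s = 0` of
`E[Tⱼ ^ s] = Γ(j + s) / Γ(j)`.
-/

open Set

section GammaLaw

variable {a r t : ℝ}

lemma gammaMeasure_eq_withDensity_restrict_Ioi (a r : ℝ) :
    gammaMeasure a r = (volume.restrict (Ioi 0)).withDensity
      fun x => ENNReal.ofReal (r ^ a / Gamma a * x ^ (a - 1) * exp (-(r * x))) := by
  rw [restrict_Ioi_eq_restrict_Ici, ← withDensity_indicator measurableSet_Ici, gammaMeasure]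
  congr with x
  by_cases hx : 0 ≤ x
  · rw [gammaPDF_of_nonneg hx, indicator_of_mem (mem_Ici.2 hx)]
  · rw [gammaPDF_of_neg (not_le.1 hx), indicator_of_notMem (by simpa using hx)]

lemma integral_gammaMeasure (ha : 0 < a) (hr : 0 < r) (f : ℝ → ℝ) :
    ∫ x, f x ∂gammaMeasure a r =
      ∫ x in Ioi 0, r ^ a / Gamma a * x ^ (a - 1) * exp (-(r * x)) * f x := by
  rw [gammaMeasure_eq_withDensity_restrict_Ioi,
    integral_withDensity_eq_integral_toReal_smul (by fun_prop) (by simp)]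
  refine setIntegral_congr_fun measurableSet_Ioi fun x (hx : 0 < x) => ?_
  have := Gamma_pos_of_pos ha
  simp only [smul_eq_mul]
  rw [ENNReal.toReal_ofReal (by positivity)]

lemma mgf_log_gammaMeasure (ha : 0 < a) (hr : 0 < r) (ht : -a < t) :
    mgf log (gammaMeasure a r) t = Gamma (a + t) / Gamma a * r ^ (-t) := by
  have hpow : ∀ x ∈ Ioi (0 : ℝ), r ^ a / Gamma a * x ^ (a - 1) * exp (-(r * x)) * exp (t * log x) =
      r ^ a / Gamma a * (x ^ (a + t - 1) * exp (-(r * x))) := by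
    intro x (hx : 0 < x)
    rw [mul_comm t, ← rpow_def_of_pos hx, show a + t - 1 = a - 1 + t by ring, rpow_add hx]
    ring
  rw [mgf, integral_gammaMeasure ha hr, setIntegral_congr_fun measurableSet_Ioi hpow,
    integral_const_mul, integral_rpow_mul_exp_neg_mul_Ioi (by linarith) hr, one_div,
    inv_rpow hr.le, ← rpow_neg hr.le, neg_add, rpow_add hr, rpow_neg hr.le a]
  field_simp

lemma Ioi_neg_subset_integrableExpSet_log_gammaMeasure (ha : 0 < a) (hr : 0 < r) :
    Ioi (-a) ⊆ integrableExpSet log (gammaMeasure a r) := by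
  intro t (ht : -a < t)
  refine Integrable.of_integral_ne_zero (ne_of_gt ?_)
  have hpos := Gamma_pos_of_pos (show 0 < a + t by linarith)
  have := Gamma_pos_of_pos ha
  exact (by positivity : 0 < Gamma (a + t) / Gamma a * r ^ (-t)).trans_eq
    (mgf_log_gammaMeasure ha hr ht).symm

lemma integral_id_gammaMeasure (ha : 0 < a) (hr : 0 < r) :
    ∫ x, x ∂gammaMeasure a r = a / r := by
  have hmgf : ∫ x, x ∂gammaMeasure a r = mgf log (gammaMeasure a r) 1 := by
    rw [mgf, integral_gammaMeasure ha hr, integral_gammaMeasure ha hr]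
    refine setIntegral_congr_fun measurableSet_Ioi fun x hx => ?_
    simp only [one_mul, exp_log hx]
  have := (Gamma_pos_of_pos ha).ne'
  rw [hmgf, mgf_log_gammaMeasure ha hr (by linarith), Gamma_add_one ha.ne', rpow_neg_one]
  field_simp

lemma integrable_id_gammaMeasure (ha : 0 < a) (hr : 0 < r) :
    Integrable (fun x => x) (gammaMeasure a r) :=
  .of_integral_ne_zero (by rw [integral_id_gammaMeasure ha hr]; positivity)

lemma zero_mem_interior_integrableExpSet_log_gammaMeasure (ha : 0 < a) (hr : 0 < r) :
    0 ∈ interior (integrableExpSet log (gammaMeasure a r)) :=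
  mem_interior.2 ⟨Ioi (-a), Ioi_neg_subset_integrableExpSet_log_gammaMeasure ha hr, isOpen_Ioi,
    neg_lt_zero.2 ha⟩

lemma integrable_log_gammaMeasure (ha : 0 < a) (hr : 0 < r) :
    Integrable log (gammaMeasure a r) :=
  integrable_of_mem_interior_integrableExpSet
    (zero_mem_interior_integrableExpSet_log_gammaMeasure ha hr)

lemma hasDerivAt_mgf_log_gammaMeasure_zero (ha : 0 < a) (hr : 0 < r) :
    HasDerivAt (mgf log (gammaMeasure a r)) (digamma a - log r) 0 := by
  have hΓ : DifferentiableAt ℝ Gamma (a + 0) := by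
    rw [add_zero]
    exact differentiableAt_Gamma fun m => ((neg_nonpos.2 m.cast_nonneg).trans_lt ha).ne'
  have hΓ' : HasDerivAt (fun t => Gamma (a + t) / Gamma a) (digamma a) 0 := by
    simpa [digamma] using (hΓ.hasDerivAt.comp_const_add a 0).div_const (Gamma a)
  have hpow : HasDerivAt (fun t : ℝ => r ^ (-t)) (-log r) 0 := by
    simpa using (hasDerivAt_neg (0 : ℝ)).const_rpow hr
  have hmul := hΓ'.fun_mul hpow
  simp only [add_zero, div_self (Gamma_pos_of_pos ha).ne', neg_zero, rpow_zero, mul_one, one_mul,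
    ← sub_eq_add_neg] at hmul
  refine hmul.congr_of_eventuallyEq ?_
  filter_upwards [Ioi_mem_nhds (neg_lt_zero.2 ha)] with t ht
  exact mgf_log_gammaMeasure ha hr ht

lemma integral_log_gammaMeasure (ha : 0 < a) (hr : 0 < r) :
    ∫ x, log x ∂gammaMeasure a r = digamma a - log r := by
  rw [← (hasDerivAt_mgf_log_gammaMeasure_zero ha hr).deriv,
    deriv_mgf_zero (zero_mem_interior_integrableExpSet_log_gammaMeasure ha hr)]

end GammaLaw

section FiniteTuples

variable {ι : Type*} [Finite ι]

lemma isOpen_setOf_strictMono {α : Type*} [Preorder ι] [LinearOrder α] [TopologicalSpace α]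
    [OrderClosedTopology α] : IsOpen {x : ι → α | StrictMono x} := by
  simp only [StrictMono, ofPred_forall]
  exact isOpen_iInter_of_finite fun i => isOpen_iInter_of_finite fun j =>
    isOpen_iInter_of_finite fun _ => isOpen_lt (continuous_apply i) (continuous_apply j)

lemma isOpen_setOf_strictAnti {α : Type*} [Preorder ι] [LinearOrder α] [TopologicalSpace α]
    [OrderClosedTopology α] : IsOpen {x : ι → α | StrictAnti x} :=
  isOpen_setOf_strictMono (α := αᵒᵈ)

lemma isOpen_setOf_forall_mem {α : ι → Type*} [∀ i, TopologicalSpace (α i)]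
    {s : ∀ i, Set (α i)} (hs : ∀ i, IsOpen (s i)) : IsOpen {x : ∀ i, α i | ∀ i, x i ∈ s i} := by
  simp only [ofPred_forall]
  exact isOpen_iInter_of_finite fun i => (hs i).preimage (continuous_apply i)

end FiniteTuples

section ArrivalTimes

/-- The open cone `0 < t₀ < t₁ < ⋯ < tₙ₋₁` in `ℝⁿ`, where the arrival times of a point process on
`(0, ∞)` live. -/
def positiveChamber (n : ℕ) : Set (Fin n → ℝ) :=
  {t | StrictMono t ∧ ∀ i, t i ∈ Ioi 0}

lemma isOpen_positiveChamber (n : ℕ) : IsOpen (positiveChamber n) :=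
  isOpen_setOf_strictMono.inter (isOpen_setOf_forall_mem fun _ => isOpen_Ioi)

lemma measurableSet_positiveChamber (n : ℕ) : MeasurableSet (positiveChamber n) :=
  (isOpen_positiveChamber n).measurableSet

lemma snoc_mem_positiveChamber_iff {n : ℕ} {t : Fin (n + 1) → ℝ} {v : ℝ} :
    Fin.snoc (α := fun _ => ℝ) t v ∈ positiveChamber (n + 2) ↔
      t ∈ positiveChamber (n + 1) ∧ t (Fin.last n) < v := by
  simp only [positiveChamber, mem_ofPred_eq, Fin.strictMono_iff_lt_succ, Fin.forall_fin_succ',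
    Fin.succ_castSucc, Fin.succ_last, Fin.snoc_castSucc, Fin.snoc_last, mem_Ioi]
  grind

lemma lintegral_fin_succ_eq_lintegral_snoc {α : Type*} [MeasureSpace α]
    [SigmaFinite (volume : Measure α)] {n : ℕ} {F : (Fin (n + 1) → α) → ENNReal}
    (hF : Measurable F) :
    ∫⁻ x, F x = ∫⁻ t : Fin n → α, ∫⁻ v, F (Fin.snoc t v) := by
  have hp := (volume_preserving_piFinSuccAbove (fun _ : Fin (n + 1) => α) (Fin.last n)).symm
  rw [← hp.lintegral_comp hF, Measure.volume_eq_prod]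
  refine (lintegral_prod_symm' _ (hF.comp hp.measurable)).trans ?_
  simp [Fin.insertNthEquiv, Fin.insertNth_last']

lemma lintegral_positiveChamber_add_two {n : ℕ} {F : (Fin (n + 2) → ℝ) → ENNReal}
    (hF : Measurable F) :
    ∫⁻ t in positiveChamber (n + 2), F t =
      ∫⁻ t in positiveChamber (n + 1), ∫⁻ v in Ioi (t (Fin.last n)), F (Fin.snoc t v) := by
  rw [← lintegral_indicator (measurableSet_positiveChamber _),
    lintegral_fin_succ_eq_lintegral_snoc (hF.indicator (measurableSet_positiveChamber _)),
    ← lintegral_indicator (measurableSet_positiveChamber _)]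
  refine lintegral_congr fun t => ?_
  by_cases ht : t ∈ positiveChamber (n + 1)
  · rw [indicator_of_mem ht, ← lintegral_indicator measurableSet_Ioi]
    refine lintegral_congr fun v => ?_
    simp [indicator, snoc_mem_positiveChamber_iff, ht]
  · simp [indicator, snoc_mem_positiveChamber_iff, ht]

lemma lintegral_Ioi_mul_lintegral_Ioi {μ : Measure ℝ} [SFinite μ] {f g : ℝ → ENNReal}
    (hf : Measurable f) (hg : Measurable g) (a : ℝ) :
    ∫⁻ u in Ioi a, f u * ∫⁻ v in Ioi u, g v ∂μ ∂μ =
      ∫⁻ v in Ioi a, (∫⁻ u in Ioo a v, f u ∂μ) * g v ∂μ := by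
  have hleft : ∀ u ∈ Ioi a, f u * ∫⁻ v in Ioi u, g v ∂μ =
      ∫⁻ v in Ioi a, (Ioi u).indicator (fun v => f u * g v) v ∂μ := fun u (hu : a < u) => by
    rw [setLIntegral_indicator measurableSet_Ioi, Ioi_inter_Ioi, sup_eq_left.2 hu.le,
      lintegral_const_mul _ hg]
  have hright : ∀ v, (∫⁻ u in Ioo a v, f u ∂μ) * g v =
      ∫⁻ u in Ioi a, (Iio v).indicator (fun u => f u * g v) u ∂μ := fun v => by
    rw [setLIntegral_indicator measurableSet_Iio, Iio_inter_Ioi, lintegral_mul_const _ hf]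
  have hmeas : Measurable fun p : ℝ × ℝ => (Ioi p.1).indicator (fun v => f p.1 * g v) p.2 :=
    Measurable.ite (measurableSet_lt measurable_fst measurable_snd) (by fun_prop) measurable_const
  rw [setLIntegral_congr_fun measurableSet_Ioi hleft, lintegral_lintegral_swap hmeas.aemeasurable]
  simp only [hright]
  rfl

lemma lintegral_Ioo_pow_div_factorial (n : ℕ) {v : ℝ} (hv : 0 ≤ v) :
    ∫⁻ u in Ioo 0 v, ENNReal.ofReal (u ^ n / n.factorial) =
      ENNReal.ofReal (v ^ (n + 1) / (n + 1).factorial) := by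
  have hcont : Continuous fun u : ℝ => u ^ n / n.factorial := by fun_prop
  rw [← ofReal_integral_eq_lintegral_ofReal (hcont.integrableOn_Icc.mono_set Ioo_subset_Icc_self)]
  · rw [← integral_Ioc_eq_integral_Ioo, ← intervalIntegral.integral_of_le hv,
      intervalIntegral.integral_div, integral_pow, Nat.factorial_succ]
    push_cast
    field_simp
    simp
  · refine ae_restrict_of_forall_mem measurableSet_Ioo fun u hu => ?_
    have := hu.1
    simp only [Pi.zero_apply]
    positivity

lemma lintegral_Ioi_exp_neg (a : ℝ) :
    ∫⁻ v in Ioi a, ENNReal.ofReal (exp (-v)) = ENNReal.ofReal (exp (-a)) := by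
  rw [← ofReal_integral_eq_lintegral_ofReal (integrableOn_exp_neg_Ioi a)
    (ae_of_all _ fun v => (exp_pos _).le), integral_exp_neg_Ioi]

lemma lintegral_positiveChamber_one {H : ℝ → ENNReal} (hH : Measurable H) :
    ∫⁻ t in positiveChamber 1, H (t 0) = ∫⁻ v in Ioi 0, H v := by
  have hp := volume_preserving_funUnique (Fin 1) ℝ
  rw [← hp.setLIntegral_comp_preimage measurableSet_Ioi hH]
  congr with t
  simp [positiveChamber, Subsingleton.strictMono]

lemma lintegral_positiveChamber_last (n : ℕ) {H : ℝ → ENNReal} (hH : Measurable H) :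
    ∫⁻ t in positiveChamber (n + 1), H (t (Fin.last n)) =
      ∫⁻ v in Ioi 0, ENNReal.ofReal (v ^ n / n.factorial) * H v := by
  induction n generalizing H with
  | zero => simpa using lintegral_positiveChamber_one hH
  | succ n ih =>
    have htail : Antitone fun u => ∫⁻ v in Ioi u, H v :=
      fun _ _ h => lintegral_mono_set (Ioi_subset_Ioi h)
    rw [lintegral_positiveChamber_add_two (by fun_prop)]
    simp only [Fin.snoc_last]
    rw [ih htail.measurable, lintegral_Ioi_mul_lintegral_Ioi (by fun_prop) hH]
    refine setLIntegral_congr_fun measurableSet_Ioi fun v hv => ?_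
    simp only [lintegral_Ioo_pow_div_factorial n (le_of_lt hv)]

/-- The law of the first `n + 1` arrival times of a unit rate Poisson process on `(0, ∞)`. -/
noncomputable def arrivalMeasure (n : ℕ) : Measure (Fin (n + 1) → ℝ) :=
  (volume.restrict (positiveChamber (n + 1))).withDensity
    fun t => ENNReal.ofReal (exp (-t (Fin.last n)))

lemma lintegral_arrivalMeasure {n : ℕ} {F : (Fin (n + 1) → ℝ) → ENNReal} (hF : Measurable F) :
    ∫⁻ t, F t ∂arrivalMeasure n =
      ∫⁻ t in positiveChamber (n + 1), ENNReal.ofReal (exp (-t (Fin.last n))) * F t := by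
  rw [arrivalMeasure, lintegral_withDensity_eq_lintegral_mul _ (by fun_prop) hF]
  rfl

lemma measurePreserving_last_arrivalMeasure (n : ℕ) :
    MeasurePreserving (fun t => t (Fin.last n)) (arrivalMeasure n) (gammaMeasure (n + 1) 1) := by
  refine ⟨measurable_pi_apply _, Measure.ext_of_lintegral _ fun H hH => ?_⟩
  rw [lintegral_map hH (measurable_pi_apply _), lintegral_arrivalMeasure (by fun_prop),
    lintegral_positiveChamber_last n (H := fun v => ENNReal.ofReal (exp (-v)) * H v) (by fun_prop),
    gammaMeasure_eq_withDensity_restrict_Ioi,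
    lintegral_withDensity_eq_lintegral_mul _ (by fun_prop) hH]
  refine setLIntegral_congr_fun measurableSet_Ioi fun v (hv : 0 < v) => ?_
  simp only [Pi.mul_apply, one_rpow, Gamma_nat_eq_factorial, add_sub_cancel_right, rpow_natCast,
    one_mul]
  rw [← mul_assoc, ← ENNReal.ofReal_mul (by positivity)]
  ring_nf

lemma measurePreserving_init_arrivalMeasure (n : ℕ) :
    MeasurePreserving (fun t (i : Fin (n + 1)) => t i.castSucc)
      (arrivalMeasure (n + 1)) (arrivalMeasure n) := by
  have hinit : Measurable fun (t : Fin (n + 2) → ℝ) (i : Fin (n + 1)) => t i.castSucc := by fun_prop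
  refine ⟨hinit, Measure.ext_of_lintegral _ fun H hH => ?_⟩
  rw [lintegral_map hH hinit, lintegral_arrivalMeasure (by fun_prop),
    lintegral_arrivalMeasure hH, lintegral_positiveChamber_add_two (by fun_prop)]
  refine lintegral_congr fun t => ?_
  simp only [Fin.snoc_castSucc, Fin.snoc_last]
  rw [lintegral_mul_const _ (by fun_prop), lintegral_Ioi_exp_neg]

lemma measurePreserving_eval_arrivalMeasure {n : ℕ} (j : Fin (n + 1)) :
    MeasurePreserving (fun t => t j) (arrivalMeasure n) (gammaMeasure (j + 1) 1) := by
  induction n with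
  | zero =>
    obtain rfl := Fin.fin_one_eq_zero j
    exact measurePreserving_last_arrivalMeasure 0
  | succ n ih =>
    induction j using Fin.lastCases with
    | last => exact measurePreserving_last_arrivalMeasure (n + 1)
    | cast j => exact (ih j).comp (measurePreserving_init_arrivalMeasure n)

end ArrivalTimes

section ChangeOfVariables

lemma image_comp_setOf_strictAnti {ι α β : Type*} [Preorder ι] [LinearOrder α] [Preorder β]
    {f : α → β} {s : Set α} (hf : StrictAntiOn f s) :
    (fun x : ι → α => f ∘ x) '' {x | StrictAnti x ∧ ∀ i, x i ∈ s} =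
      {t | StrictMono t ∧ ∀ i, t i ∈ f '' s} := by
  ext t
  constructor
  · rintro ⟨x, ⟨hx, hxs⟩, rfl⟩
    exact ⟨fun i j hij => hf (hxs j) (hxs i) (hx hij), fun i => mem_image_of_mem f (hxs i)⟩
  · rintro ⟨ht, hts⟩
    choose x hxs hxt using hts
    obtain rfl : f ∘ x = t := funext hxt
    exact ⟨x, ⟨fun i j hij => (hf.lt_iff_gt (hxs i) (hxs j)).1 (ht hij), hxs⟩, rfl⟩

lemma lintegral_image_comp_eq_lintegral_prod_abs_deriv_mul {ι : Type*} [Fintype ι] {f f' : ℝ → ℝ}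
    {s : Set ℝ} (hf' : ∀ x ∈ s, HasDerivWithinAt f (f' x) s x) (hinj : InjOn f s)
    {A : Set (ι → ℝ)} (hA : MeasurableSet A) (hAs : ∀ x ∈ A, ∀ i, x i ∈ s)
    (F : (ι → ℝ) → ENNReal) :
    ∫⁻ t in (fun x => f ∘ x) '' A, F t =
      ∫⁻ x in A, ENNReal.ofReal (∏ i, |f' (x i)|) * F (f ∘ x) := by
  let L : (ι → ℝ) → (ι → ℝ) →L[ℝ] (ι → ℝ) := fun x =>
    .pi fun i => (ContinuousLinearMap.toSpanSingleton ℝ (f' (x i))).comp (.proj i)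
  have hderiv : ∀ x ∈ A, HasFDerivWithinAt (fun x => f ∘ x) (L x) A x := fun x hx =>
    hasFDerivWithinAt_pi.2 fun i => (hf' (x i) (hAs x hx i)).hasFDerivWithinAt.comp x
      (hasFDerivAt_apply i x).hasFDerivWithinAt fun y hy => hAs y hy i
  have hinjA : InjOn (fun x => f ∘ x) A := fun x hx y hy hxy =>
    funext fun i => hinj (hAs x hx i) (hAs y hy i) (congrFun hxy i)
  have hdet : ∀ x, |(L x).det| = ∏ i, |f' (x i)| := fun x => by
    simp only [L, ContinuousLinearMap.det_pi, ContinuousLinearMap.det_toSpanSingleton,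
      Finset.abs_prod]
  rw [lintegral_image_eq_lintegral_abs_det_fderiv_mul volume hA hderiv hinjA]
  simp only [hdet]

end ChangeOfVariables

section GEV

variable {μ σ ξ : ℝ} {x : ℝ}

/-- The support of the one-dimensional GEV law. -/
def gevSupport (μ σ ξ : ℝ) : Set ℝ :=
  {x | 0 < 1 + ξ * ((x - μ) / σ)}

/-- The exponent function `Λ` of the GEV law, whose distribution function is `exp (-Λ)` on
`gevSupport`; it turns GEV order statistics into arrival times of a Poisson process. -/
noncomputable def gevExponent (μ σ ξ x : ℝ) : ℝ :=
  (1 + ξ * ((x - μ) / σ)) ^ (-1 / ξ)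

/-- The intensity `-Λ'` of the Poisson process on `gevSupport` whose largest points follow the
GEV_r law, where `Λ` is `gevExponent`. -/
noncomputable def gevIntensity (μ σ ξ x : ℝ) : ℝ :=
  σ⁻¹ * (1 + ξ * ((x - μ) / σ)) ^ (-(1 / ξ + 1))

@[fun_prop]
lemma measurable_gevExponent : Measurable (gevExponent μ σ ξ) := by
  unfold gevExponent
  fun_prop

@[fun_prop]
lemma measurable_gevIntensity : Measurable (gevIntensity μ σ ξ) := by
  unfold gevIntensity
  fun_prop

lemma gevExponent_pos (hx : x ∈ gevSupport μ σ ξ) : 0 < gevExponent μ σ ξ x :=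
  rpow_pos_of_pos hx _

lemma gevIntensity_pos (hσ : 0 < σ) (hx : x ∈ gevSupport μ σ ξ) : 0 < gevIntensity μ σ ξ x :=
  mul_pos (inv_pos.2 hσ) (rpow_pos_of_pos hx _)

lemma isOpen_gevSupport : IsOpen (gevSupport μ σ ξ) :=
  isOpen_lt continuous_const (by fun_prop)

lemma log_one_add_eq_neg_mul_log_gevExponent (hξ : ξ ≠ 0) (hx : x ∈ gevSupport μ σ ξ) :
    log (1 + ξ * ((x - μ) / σ)) = -ξ * log (gevExponent μ σ ξ x) := by
  rw [gevExponent, log_rpow hx]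
  field_simp

lemma strictAntiOn_gevExponent (hσ : 0 < σ) (hξ : ξ ≠ 0) :
    StrictAntiOn (gevExponent μ σ ξ) (gevSupport μ σ ξ) := by
  intro x hx y hy hxy
  have hz : (x - μ) / σ < (y - μ) / σ := by gcongr
  rcases hξ.lt_or_gt with hneg | hpos
  · exact rpow_lt_rpow (le_of_lt hy) (by nlinarith) (div_pos_of_neg_of_neg (by norm_num) hneg)
  · exact rpow_lt_rpow_of_neg hx (by nlinarith) (div_neg_of_neg_of_pos (by norm_num) hpos)

lemma image_gevExponent_gevSupport (hσ : σ ≠ 0) (hξ : ξ ≠ 0) :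
    gevExponent μ σ ξ '' gevSupport μ σ ξ = Ioi 0 := by
  refine (image_subset_iff.2 fun x hx => gevExponent_pos hx).antisymm fun w (hw : 0 < w) => ?_
  have hinv : 1 + ξ * ((μ + σ * ((w ^ (-ξ) - 1) / ξ) - μ) / σ) = w ^ (-ξ) := by
    field_simp
    ring
  refine ⟨μ + σ * ((w ^ (-ξ) - 1) / ξ), (rpow_pos_of_pos hw _).trans_eq hinv.symm, ?_⟩
  simp only [gevExponent]
  rw [hinv, ← rpow_mul hw.le, show -ξ * (-1 / ξ) = 1 by field_simp, rpow_one]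

lemma hasDerivAt_gevExponent (hξ : ξ ≠ 0) (hx : x ∈ gevSupport μ σ ξ) :
    HasDerivAt (gevExponent μ σ ξ) (-gevIntensity μ σ ξ x) x := by
  have haffine : HasDerivAt (fun x => 1 + ξ * ((x - μ) / σ)) (ξ * (1 / σ)) x :=
    ((((hasDerivAt_id x).sub_const μ).div_const σ).const_mul ξ).const_add 1
  refine (haffine.rpow_const (p := -1 / ξ) (.inl (ne_of_gt hx))).congr_deriv ?_
  rw [gevIntensity, show -1 / ξ - 1 = -(1 / ξ + 1) by ring]
  field_simp

/-- The region `D_r` on which the GEV_r density is positive. -/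
def gevrSupport (μ σ ξ : ℝ) (r : ℕ) : Set (Fin r → ℝ) :=
  {x | StrictAnti x ∧ ∀ i, x i ∈ gevSupport μ σ ξ}

lemma measurableSet_gevrSupport (r : ℕ) : MeasurableSet (gevrSupport μ σ ξ r) :=
  (isOpen_setOf_strictAnti.inter (isOpen_setOf_forall_mem fun _ => isOpen_gevSupport)).measurableSet

lemma image_gevExponent_gevrSupport (hσ : 0 < σ) (hξ : ξ ≠ 0) (r : ℕ) :
    (fun x => gevExponent μ σ ξ ∘ x) '' gevrSupport μ σ ξ r = positiveChamber r := by
  rw [gevrSupport, image_comp_setOf_strictAnti (strictAntiOn_gevExponent hσ hξ),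
    image_gevExponent_gevSupport hσ.ne' hξ, positiveChamber]

lemma prod_gevIntensity {r : ℕ} {x : Fin r → ℝ} (hx : ∀ i, x i ∈ gevSupport μ σ ξ) :
    ∏ i, gevIntensity μ σ ξ (x i) =
      (σ ^ r)⁻¹ * exp (-((1 / ξ + 1) * ∑ i, log (1 + ξ * ((x i - μ) / σ)))) := by
  have hexp : ∀ i, gevIntensity μ σ ξ (x i) =
      σ⁻¹ * exp (-(1 / ξ + 1) * log (1 + ξ * ((x i - μ) / σ))) := fun i => by
    rw [gevIntensity, rpow_def_of_pos (hx i), mul_comm (log _)]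
  simp only [hexp, Finset.prod_mul_distrib, ← exp_sum, Finset.prod_const, Finset.card_univ,
    Fintype.card_fin, inv_pow]
  rw [← Finset.mul_sum, neg_mul]

lemma gevrDensity_succ (n : ℕ) :
    gevrDensity μ σ ξ (n + 1) = (gevrSupport μ σ ξ (n + 1)).indicator fun x =>
      (∏ i, gevIntensity μ σ ξ (x i)) * exp (-gevExponent μ σ ξ (x (Fin.last n))) := by
  ext x
  by_cases hx : x ∈ gevrSupport μ σ ξ (n + 1)
  · rw [indicator_of_mem hx, prod_gevIntensity hx.2, mul_assoc, ← exp_add, ← sub_eq_neg_add,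
      gevrDensity, dif_pos ⟨n.succ_pos, hx⟩]
    rfl
  · rw [indicator_of_notMem hx, gevrDensity, dif_neg fun h => hx h.2]

lemma gevrMeasure_succ (n : ℕ) :
    gevrMeasure μ σ ξ (n + 1) = (volume.restrict (gevrSupport μ σ ξ (n + 1))).withDensity fun x =>
      ENNReal.ofReal
        ((∏ i, gevIntensity μ σ ξ (x i)) * exp (-gevExponent μ σ ξ (x (Fin.last n)))) := by
  rw [← withDensity_indicator (measurableSet_gevrSupport _), gevrMeasure, gevrDensity_succ]
  congr with x
  exact congrFun (indicator_comp_of_zero ENNReal.ofReal_zero).symm x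

lemma ae_gevrMeasure_mem_gevrSupport (r : ℕ) :
    ∀ᵐ x ∂gevrMeasure μ σ ξ r, x ∈ gevrSupport μ σ ξ r := by
  cases r with
  | zero => simp [gevrMeasure, gevrDensity]
  | succ n =>
    rw [gevrMeasure_succ]
    exact (withDensity_absolutelyContinuous _ _).ae_le
      (ae_restrict_mem (measurableSet_gevrSupport _))

lemma measurePreserving_gevExponent_comp (hσ : 0 < σ) (hξ : ξ ≠ 0) (n : ℕ) :
    MeasurePreserving (fun x => gevExponent μ σ ξ ∘ x) (gevrMeasure μ σ ξ (n + 1))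
      (arrivalMeasure n) := by
  have hcomp : Measurable fun x : Fin (n + 1) → ℝ => gevExponent μ σ ξ ∘ x :=
    measurable_pi_lambda _ fun i => measurable_gevExponent.comp (measurable_pi_apply i)
  refine ⟨hcomp, Measure.ext_of_lintegral _ fun F hF => ?_⟩
  rw [lintegral_map hF hcomp, gevrMeasure_succ,
    lintegral_withDensity_eq_lintegral_mul _ (by fun_prop) (by fun_prop),
    lintegral_arrivalMeasure hF, ← image_gevExponent_gevrSupport hσ hξ,
    lintegral_image_comp_eq_lintegral_prod_abs_deriv_mul
      (fun x hx => (hasDerivAt_gevExponent hξ hx).hasDerivWithinAt)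
      (strictAntiOn_gevExponent hσ hξ).injOn (measurableSet_gevrSupport _) fun x hx => hx.2]
  refine setLIntegral_congr_fun (measurableSet_gevrSupport _) fun x hx => ?_
  have hpos := fun i => gevIntensity_pos hσ (hx.2 i)
  simp only [Pi.mul_apply, Function.comp_apply, abs_neg, abs_of_pos (hpos _)]
  rw [ENNReal.ofReal_mul (Finset.prod_nonneg fun i _ => (hpos i).le), mul_assoc]

lemma measurePreserving_gevExponent_apply (hσ : 0 < σ) (hξ : ξ ≠ 0) {r : ℕ} (j : Fin r) :
    MeasurePreserving (fun x => gevExponent μ σ ξ (x j)) (gevrMeasure μ σ ξ r)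
      (gammaMeasure (j + 1) 1) := by
  obtain ⟨n, rfl⟩ := Nat.exists_eq_succ_of_ne_zero j.pos.ne'
  exact (measurePreserving_eval_arrivalMeasure j).comp
    (measurePreserving_gevExponent_comp hσ hξ n)

lemma isProbabilityMeasure_gevrMeasure (hσ : 0 < σ) (hξ : ξ ≠ 0) {r : ℕ} (hr : 0 < r) :
    IsProbabilityMeasure (gevrMeasure μ σ ξ r) :=
  (measurePreserving_gevExponent_apply hσ hξ ⟨0, hr⟩).hasLaw.isProbabilityMeasure_iff.2
    (isProbabilityMeasure_gammaMeasure (by positivity) one_pos)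

lemma integrable_gevExponent_apply (hσ : 0 < σ) (hξ : ξ ≠ 0) {r : ℕ} (j : Fin r) :
    Integrable (fun x => gevExponent μ σ ξ (x j)) (gevrMeasure μ σ ξ r) :=
  (measurePreserving_gevExponent_apply hσ hξ j).integrable_comp_of_integrable (g := fun t => t)
    (integrable_id_gammaMeasure (by positivity) one_pos)

lemma integral_gevExponent_apply (hσ : 0 < σ) (hξ : ξ ≠ 0) {r : ℕ} (j : Fin r) :
    ∫ x, gevExponent μ σ ξ (x j) ∂gevrMeasure μ σ ξ r = j + 1 := by
  rw [(measurePreserving_gevExponent_apply hσ hξ j).hasLaw.integral_eq,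
    integral_id_gammaMeasure (by positivity) one_pos, div_one]

lemma integrable_log_gevExponent_apply (hσ : 0 < σ) (hξ : ξ ≠ 0) {r : ℕ} (j : Fin r) :
    Integrable (fun x => log (gevExponent μ σ ξ (x j))) (gevrMeasure μ σ ξ r) :=
  (measurePreserving_gevExponent_apply hσ hξ j).integrable_comp_of_integrable (g := log)
    (integrable_log_gammaMeasure (by positivity) one_pos)

lemma integral_log_gevExponent_apply (hσ : 0 < σ) (hξ : ξ ≠ 0) {r : ℕ} (j : Fin r) :
    ∫ x, log (gevExponent μ σ ξ (x j)) ∂gevrMeasure μ σ ξ r = digamma (j + 1) := by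
  have hlaw := (measurePreserving_gevExponent_apply (μ := μ) hσ hξ j).hasLaw
  refine (hlaw.integral_comp (f := log) (by fun_prop)).trans ?_
  rw [integral_log_gammaMeasure (by positivity) one_pos, log_one, sub_zero]

end GEV

/-- the mean of the entropy difference
`Y = −log σ − (1+ξZ_r)^{−1/ξ} + (1+ξZ_{r−1})^{−1/ξ} − (1/ξ+1) log(1+ξZ_r)`
under the GEV_r distribution is `−log σ − 1 + (1+ξ)ψ(r)`. -/
theorem entropy_difference_mean
    (μ σ ξ : ℝ) (hσ : 0 < σ) (hξ : ξ ≠ 0) (r : ℕ) (hr : 2 ≤ r) :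
    ∫ x : Fin r → ℝ,
        (-Real.log σ
          - (1 + ξ * ((x ⟨r - 1, by omega⟩ - μ) / σ)) ^ (-1 / ξ)
          + (1 + ξ * ((x ⟨r - 2, by omega⟩ - μ) / σ)) ^ (-1 / ξ)
          - (1 / ξ + 1) * Real.log (1 + ξ * ((x ⟨r - 1, by omega⟩ - μ) / σ)))
        ∂(gevrMeasure μ σ ξ r)
      = -Real.log σ - 1 + (1 + ξ) * digamma r := by
  let i : Fin r := ⟨r - 1, by omega⟩
  let j : Fin r := ⟨r - 2, by omega⟩
  have := isProbabilityMeasure_gevrMeasure (μ := μ) hσ hξ (r := r) (by omega)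
  have hΛ := integrable_gevExponent_apply (μ := μ) hσ hξ (r := r)
  have hlogΛ := integrable_log_gevExponent_apply (μ := μ) hσ hξ i
  calc
    _ = ∫ x, (-log σ - gevExponent μ σ ξ (x i) + gevExponent μ σ ξ (x j)
          + (1 + ξ) * log (gevExponent μ σ ξ (x i))) ∂gevrMeasure μ σ ξ r := by
      refine integral_congr_ae ?_
      filter_upwards [ae_gevrMeasure_mem_gevrSupport r] with x hx
      rw [log_one_add_eq_neg_mul_log_gevExponent hξ (hx.2 i), sub_eq_add_neg _ (_ * (_ * _))]
      congr 1
      field_simp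
    _ = -log σ - (i + 1) + (j + 1) + (1 + ξ) * digamma (i + 1) := by
      rw [integral_add (by fun_prop) (by fun_prop), integral_add (by fun_prop) (hΛ j),
        integral_sub (by fun_prop) (hΛ i), integral_const_mul, integral_const, probReal_univ,
        one_smul, integral_log_gevExponent_apply hσ hξ]
      simp only [integral_gevExponent_apply hσ hξ]
    _ = -log σ - 1 + (1 + ξ) * digamma r := by
      simp only [i, j, Nat.cast_sub hr, Nat.cast_sub (one_le_two.trans hr)]
      norm_num
      ring
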